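/- arXiv:1811.02525 — 7 statements merged into one kernel-verified Lean document; each statement's English description precedes it below -/
import Mathlib

section
/- In the setting of stochastic gradient descent with uniform sampling (θ_{t+1}(i₁,…,i_t) a Euclidean projection of θ_t − α_t ∇f_{i_t}(θ_t) onto Θ, θ₁ ∈ Θ), assume additionally: the step sizes are α_t = 1/√t; the feasible set Θ has bounded diameter in sup norm, ‖θ − θ'‖_∞ ≤ D for all θ, θ' ∈ Θ; and the gradients are bounded, ‖∇f_i(θ)‖_∞ ≤ G for all i ∈ {1,…,n} and θ ∈ Θ. Then for every θ* ∈ Θ, the expected regret satisfies Σ_{t=1}^T E[ f(θ_t) − f(θ*) ] ≤ d G² (√T − 1/2) + (d D²/2) √T, where f = (1/n) Σ_i f_i. -/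
theorem aux_norm_sq {d : ℕ} (x : EuclideanSpace ℝ (Fin d)) (B : ℝ) (h : ∀ i, |x i| ≤ B) :
    ‖x‖ ^ 2 ≤ d * B ^ 2 := by
  rw [EuclideanSpace.real_norm_sq_eq]
  calc ∑ i, (x i) ^ 2 ≤ ∑ _i : Fin d, B ^ 2 :=
        Finset.sum_le_sum fun i _ => by
          rw [← sq_abs (x i)]
          exact pow_le_pow_left₀ (abs_nonneg _) (h i) 2
    _ = d * B ^ 2 := by simp

theorem aux_grad {d : ℕ} (f : EuclideanSpace ℝ (Fin d) → ℝ) (hc : ConvexOn ℝ Set.univ f)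
    (hd : Differentiable ℝ f) (x y : EuclideanSpace ℝ (Fin d)) :
    f x - f y ≤ inner ℝ (gradient f x) (x - y) := by
  have hg : ConvexOn ℝ Set.univ (f ∘ (AffineMap.lineMap x y : ℝ →ᵃ[ℝ] _)) := by
    have := hc.comp_affineMap (AffineMap.lineMap x y : ℝ →ᵃ[ℝ] _)
    simpa using this
  have h1 : HasDerivAt (f ∘ (AffineMap.lineMap x y : ℝ →ᵃ[ℝ] _))
      (fderiv ℝ f x (y - x)) (0 : ℝ) := by
    have h2 : HasFDerivAt f (fderiv ℝ f x) ((AffineMap.lineMap x y : ℝ →ᵃ[ℝ] _) (0 : ℝ)) := by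
      simpa using (hd x).hasFDerivAt
    exact h2.comp_hasDerivAt (0 : ℝ) AffineMap.hasDerivAt_lineMap
  have h3 := hg.le_slope_of_hasDerivAt (Set.mem_univ 0) (Set.mem_univ 1) one_pos h1
  rw [← toDual_gradient, InnerProductSpace.toDual_apply_apply] at h3
  simp only [slope_def_field, Function.comp, AffineMap.lineMap_apply_one,
    AffineMap.lineMap_apply_zero, sub_zero, div_one] at h3
  rw [← neg_sub y x, inner_neg_right]
  linarith

theorem aux_proj {d : ℕ} {K : Set (EuclideanSpace ℝ (Fin d))} (hK : Convex ℝ K)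
    (p y z : EuclideanSpace ℝ (Fin d)) (hp : p ∈ K) (hz : z ∈ K)
    (h : ∀ u ∈ K, ‖p - y‖ ≤ ‖u - y‖) : ‖p - z‖ ^ 2 ≤ ‖y - z‖ ^ 2 := by
  have : Nonempty K := ⟨⟨p, hp⟩⟩
  have h1 : ‖y - p‖ = ⨅ w : K, ‖y - w‖ := by
    apply le_antisymm
    · refine le_ciInf fun w => ?_
      rw [norm_sub_rev, norm_sub_rev y]
      exact h w w.2
    · exact ciInf_le (f := fun w : K => ‖y - w‖) ⟨0, by rintro _ ⟨w, rfl⟩; exact norm_nonneg _⟩ ⟨p, hp⟩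
  have h2 := (norm_eq_iInf_iff_real_inner_le_zero hK hp).1 h1 z hz
  have h3 : y - z = (y - p) - (z - p) := by abel
  rw [h3, norm_sub_sq_real (y - p), norm_sub_rev p z]
  nlinarith [sq_nonneg ‖y - p‖]

theorem aux_step {d : ℕ} {K : Set (EuclideanSpace ℝ (Fin d))} (hK : Convex ℝ K)
    (f : EuclideanSpace ℝ (Fin d) → ℝ) (hc : ConvexOn ℝ Set.univ f)
    (hd : Differentiable ℝ f) (G c : ℝ) (hcpos : 0 < c)
    (x p z : EuclideanSpace ℝ (Fin d)) (hp : p ∈ K) (hz : z ∈ K)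
    (hG : ∀ h, |gradient f x h| ≤ G)
    (h : ∀ u ∈ K, ‖p - (x - (1 / c) • gradient f x)‖ ≤ ‖u - (x - (1 / c) • gradient f x)‖) :
    f x - f z ≤ c / 2 * (‖x - z‖ ^ 2 - ‖p - z‖ ^ 2) + d * G ^ 2 * (1 / (2 * c)) := by
  have h1 := aux_proj hK p _ z hp hz h
  have h2 := aux_grad f hc hd x z
  have h3 := aux_norm_sq _ G hG
  have h4 : x - (1 / c) • gradient f x - z = (x - z) - (1 / c) • gradient f x := by abel
  rw [h4, norm_sub_sq_real (x - z), inner_smul_right, norm_smul, mul_pow, Real.norm_eq_abs, sq_abs,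
    real_inner_comm] at h1
  have h5 : c / 2 * ‖p - z‖ ^ 2 ≤ c / 2 * ‖x - z‖ ^ 2 - inner ℝ (gradient f x) (x - z)
      + ‖gradient f x‖ ^ 2 * (1 / (2 * c)) := by
    calc _ ≤ c / 2 * _ := mul_le_mul_of_nonneg_left h1 (by positivity)
      _ = _ := by field_simp
  have h6 : ‖gradient f x‖ ^ 2 * (1 / (2 * c)) ≤ d * G ^ 2 * (1 / (2 * c)) :=
    mul_le_mul_of_nonneg_right h3 (by positivity)
  linarith

theorem aux_tele (R E : ℕ → ℝ) (A B : ℝ) (hA : 0 ≤ A) (hE0 : ∀ k, 0 ≤ E k) (hE : ∀ k, E k ≤ B)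
    (hR : ∀ k : ℕ, R k ≤ Real.sqrt (k + 1) / 2 * (E k - E (k + 1))
      + A * (1 / (2 * Real.sqrt (k + 1)))) (T : ℕ) (hT : 1 ≤ T) :
    ∑ k ∈ Finset.range T, R k ≤ A * (Real.sqrt T - 1 / 2) + B / 2 * Real.sqrt T := by
  suffices h : ∑ k ∈ Finset.range T, R k ≤ A * (Real.sqrt T - 1 / 2) + B / 2 * Real.sqrt T
      - Real.sqrt T / 2 * E T by
    have : 0 ≤ Real.sqrt T / 2 * E T := mul_nonneg (by positivity) (hE0 T)
    linarith
  induction T, hT using Nat.le_induction with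
  | base =>
    have := hR 0
    have := hE 0
    simp at *
    linarith
  | succ k hk ih =>
    rw [Finset.sum_range_succ]
    have h1 := hR k
    push_cast
    have hs : 0 < Real.sqrt ((k : ℝ) + 1) := Real.sqrt_pos.2 (by positivity)
    have hle : Real.sqrt k ≤ Real.sqrt ((k : ℝ) + 1) := Real.sqrt_le_sqrt (by linarith)
    have h2 : 1 / (2 * Real.sqrt ((k : ℝ) + 1)) ≤ Real.sqrt ((k : ℝ) + 1) - Real.sqrt k := by
      rw [div_le_iff₀ (by positivity)]
      have e1 := Real.sq_sqrt (show (0 : ℝ) ≤ (k : ℝ) + 1 by positivity)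
      have e2 := Real.sq_sqrt (show (0 : ℝ) ≤ (k : ℝ) by positivity)
      nlinarith [sq_nonneg (Real.sqrt ((k : ℝ) + 1) - Real.sqrt k)]
    have h3 := mul_le_mul_of_nonneg_left h2 hA
    have h4 := mul_le_mul_of_nonneg_left (hE k) (sub_nonneg.2 hle)
    linarith

/-- Corollary 1.1 of the paper: expected regret bound for SGD with uniform
sampling, step sizes `α_t = 1/√t`, sup-norm diameter `D` of `Θ` and sup-norm gradient bound `G`:
`Σ_{t=1}^T E[f(θ_t) − f(θ*)] ≤ d G² (√T − 1/2) + (d D²/2) √T`. -/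
theorem stmt_4 (d n : ℕ) (hn : 0 < n) (T : ℕ) (hT : 1 ≤ T)
    (Θ : Set (EuclideanSpace ℝ (Fin d))) (hΘconv : Convex ℝ Θ)
    (f : Fin n → EuclideanSpace ℝ (Fin d) → ℝ)
    (hconv : ∀ i, ConvexOn ℝ Set.univ (f i))
    (hdiff : ∀ i, Differentiable ℝ (f i))
    (D G : ℝ)
    (hD : ∀ θ ∈ Θ, ∀ θ' ∈ Θ, ∀ h : Fin d, |θ h - θ' h| ≤ D)
    (hG : ∀ (i : Fin n), ∀ θ ∈ Θ, ∀ h : Fin d, |gradient (f i) θ h| ≤ G)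
    (θ₁ : EuclideanSpace ℝ (Fin d)) (hθ₁ : θ₁ ∈ Θ)
    (θpath : (t : ℕ) → (Fin t → Fin n) → EuclideanSpace ℝ (Fin d))
    (hinit : ∀ s : Fin 0 → Fin n, θpath 0 s = θ₁)
    (hmem : ∀ t s, θpath t s ∈ Θ)
    (hproj : ∀ (t : ℕ) (s : Fin t → Fin n) (i : Fin n), ∀ u ∈ Θ,
      ‖θpath (t + 1) (Fin.snoc s i) -
          (θpath t s - (1 / Real.sqrt (t + 1)) • gradient (f i) (θpath t s))‖ ≤
        ‖u - (θpath t s - (1 / Real.sqrt (t + 1)) • gradient (f i) (θpath t s))‖)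
    (θstar : EuclideanSpace ℝ (Fin d)) (hθstar : θstar ∈ Θ) :
    ∑ k ∈ Finset.range T, ((1 : ℝ) / (n : ℝ) ^ k) *
        ∑ s : Fin k → Fin n,
          ((1 / (n : ℝ)) * ∑ i, f i (θpath k s) - (1 / (n : ℝ)) * ∑ i, f i θstar) ≤
      (d : ℝ) * G ^ 2 * (Real.sqrt T - 1 / 2) + ((d : ℝ) * D ^ 2 / 2) * Real.sqrt T := by
  have hn' : (0 : ℝ) < n := by exact_mod_cast hn
  apply aux_tele _ (fun k => ((1 : ℝ) / (n : ℝ) ^ k) * ∑ s : Fin k → Fin n,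
    ‖θpath k s - θstar‖ ^ 2) _ _ (by positivity) (fun k => by positivity) _ _ T hT
  · intro k
    have h1 : ∑ s : Fin k → Fin n, ‖θpath k s - θstar‖ ^ 2 ≤ (n : ℝ) ^ k * (d * D ^ 2) := by
      refine (Finset.sum_le_sum fun s _ => aux_norm_sq _ D (fun i => ?_)).trans
        (b := ∑ s : Fin k → Fin n, (d * D ^ 2 : ℝ)) ?_
      · simpa using hD _ (hmem k s) _ hθstar i
      · simp
    calc _ ≤ ((1 : ℝ) / (n : ℝ) ^ k) * ((n : ℝ) ^ k * (d * D ^ 2)) :=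
          mul_le_mul_of_nonneg_left h1 (by positivity)
      _ = _ := by field_simp
  · intro k
    have hs : 0 < Real.sqrt ((k : ℝ) + 1) := Real.sqrt_pos.2 (by positivity)
    have hsum : ∑ s : Fin (k + 1) → Fin n, ‖θpath (k + 1) s - θstar‖ ^ 2
        = ∑ s : Fin k → Fin n, ∑ i, ‖θpath (k + 1) (Fin.snoc s i) - θstar‖ ^ 2 := by
      rw [← (Fin.snocEquiv (fun _ : Fin (k + 1) => Fin n)).sum_comp, Fintype.sum_prod_type,
        Finset.sum_comm]
      rfl
    have hstep : ∀ s : Fin k → Fin n,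
        (1 / (n : ℝ)) * ∑ i, f i (θpath k s) - (1 / (n : ℝ)) * ∑ i, f i θstar ≤
        Real.sqrt ((k : ℝ) + 1) / 2 * (‖θpath k s - θstar‖ ^ 2 - (1 / (n : ℝ)) *
          ∑ i, ‖θpath (k + 1) (Fin.snoc s i) - θstar‖ ^ 2)
          + d * G ^ 2 * (1 / (2 * Real.sqrt ((k : ℝ) + 1))) := by
      intro s
      have h := Finset.sum_le_sum fun (i : Fin n) (_ : i ∈ Finset.univ) =>
        aux_step hΘconv (f i) (hconv i) (hdiff i) G _ hs (θpath k s)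
          (θpath (k + 1) (Fin.snoc s i)) θstar (hmem _ _) hθstar (hG i _ (hmem k s))
          (hproj k s i)
      rw [Finset.sum_sub_distrib, Finset.sum_add_distrib, ← Finset.mul_sum,
        Finset.sum_sub_distrib] at h
      simp only [Finset.sum_const, Finset.card_univ, Fintype.card_fin, nsmul_eq_mul] at h
      rw [← mul_sub]
      refine (mul_le_mul_of_nonneg_left h (by positivity : (0 : ℝ) ≤ 1 / n)).trans (le_of_eq ?_)
      field_simp
    have h := Finset.sum_le_sum fun (s : Fin k → Fin n) (_ : s ∈ Finset.univ) => hstep s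
    refine (mul_le_mul_of_nonneg_left h (by positivity : (0 : ℝ) ≤ 1 / (n : ℝ) ^ k)).trans
      (le_of_eq ?_)
    simp only [hsum]
    rw [Finset.sum_add_distrib, ← Finset.mul_sum, Finset.sum_sub_distrib, ← Finset.mul_sum]
    simp only [Finset.sum_const, Finset.card_univ, Fintype.card_fun, Fintype.card_fin,
      nsmul_eq_mul, Nat.cast_pow]
    field_simp
    ring
end

section
/- Let T ≥ 1, let G ≥ 0, and for each t ∈ {1, …, T} let g_{t,1}, …, g_{t,n} ∈ ℝ^d be nonzero vectors with ‖g_{t,i}‖_∞ ≤ G for all i. Let p̂_{t,i} = ‖g_{t,i}‖₂ / Σ_j ‖g_{t,j}‖₂ be the optimal sampling probabilities with weights ŵ_{t,i} = 1/(n p̂_{t,i}), and let α_t = 1/√t. Then Σ_{t=1}^T (α_t/2) Σ_{i=1}^n p̂_{t,i} ŵ_{t,i}² ‖g_{t,i}‖₂² ≤ d G² (√T − 1/2) − Σ_{t=1}^T (α_t/2) Var_n(‖g_{t,i}‖₂), where Var_n(x) = (1/n) Σ_i (x_i − (1/n) Σ_j x_j)². -/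
theorem aux_harm (T : ℕ) (hT : 1 ≤ T) :
    ∑ t ∈ Finset.Icc 1 T, ((1 / Real.sqrt t) / 2) ≤ Real.sqrt T - 1 / 2 := by
  induction T, hT using Nat.le_induction with
  | base => norm_num
  | succ k hk ih =>
    rw [Finset.sum_Icc_succ_top (by omega)]
    have hb : 0 < Real.sqrt ((k + 1 : ℕ) : ℝ) := Real.sqrt_pos.mpr (by positivity)
    have ha : 0 ≤ Real.sqrt (k : ℝ) := Real.sqrt_nonneg _
    have hb2 : Real.sqrt ((k + 1 : ℕ) : ℝ) ^ 2 = k + 1 := by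
      rw [Real.sq_sqrt (by positivity)]; push_cast; ring
    have ha2 : Real.sqrt (k : ℝ) ^ 2 = k := Real.sq_sqrt (by positivity)
    have key : 1 / Real.sqrt ((k + 1 : ℕ) : ℝ) / 2
        ≤ Real.sqrt ((k + 1 : ℕ) : ℝ) - Real.sqrt (k : ℝ) := by
      rw [div_div, div_le_iff₀ (by positivity)]
      nlinarith [sq_nonneg (Real.sqrt ((k + 1 : ℕ) : ℝ) - Real.sqrt (k : ℝ))]
    linarith

theorem aux_var (n : ℕ) (hn : 0 < n) (x : Fin n → ℝ) (hx : ∀ i, 0 < x i) (C : ℝ)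
    (hC : ∀ i, x i ^ 2 ≤ C) :
    ∑ i, (x i / ∑ j, x j) * (1 / ((n : ℝ) * (x i / ∑ j, x j))) ^ 2 * x i ^ 2
      + (1 / (n : ℝ)) * ∑ i, (x i - (1 / (n : ℝ)) * ∑ j, x j) ^ 2 ≤ C := by
  have hn' : (0 : ℝ) < n := by exact_mod_cast hn
  haveI : Nonempty (Fin n) := ⟨⟨0, hn⟩⟩
  have hS : 0 < ∑ j, x j := Finset.sum_pos (fun i _ => hx i) Finset.univ_nonempty
  have hQ : ∑ i, x i ^ 2 ≤ n * C := by
    have := Finset.sum_le_sum (fun i (_ : i ∈ Finset.univ) => hC i)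
    simpa using this
  have h1 : ∑ i, (x i / ∑ j, x j) * (1 / ((n : ℝ) * (x i / ∑ j, x j))) ^ 2 * x i ^ 2
      = (∑ j, x j) ^ 2 / n ^ 2 := by
    have : ∀ i, (x i / ∑ j, x j) * (1 / ((n : ℝ) * (x i / ∑ j, x j))) ^ 2 * x i ^ 2
        = x i * ((∑ j, x j) / n ^ 2) := by
      intro i
      have := hx i
      generalize (∑ j, x j) = S at *
      field_simp
    rw [Finset.sum_congr rfl (fun i _ => this i), ← Finset.sum_mul]
    ring
  have h2 : ∑ i, (x i - (1 / (n : ℝ)) * ∑ j, x j) ^ 2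
      = ∑ i, x i ^ 2 - (∑ j, x j) ^ 2 / n := by
    simp only [sub_sq, Finset.sum_add_distrib, Finset.sum_sub_distrib, ← Finset.sum_mul,
      ← Finset.mul_sum, Finset.sum_const, Finset.card_univ, Fintype.card_fin, nsmul_eq_mul]
    field_simp
    ring
  rw [h1, h2]
  have : (∑ j, x j) ^ 2 / (n : ℝ) ^ 2 + 1 / (n : ℝ) * (∑ i, x i ^ 2 - (∑ j, x j) ^ 2 / n)
      = (∑ i, x i ^ 2) / n := by
    field_simp
    ring
  rw [this, div_le_iff₀ hn']
  linarith

/-- Lemma A.3 of the paper: total error bound for ap-SGD with optimal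
probabilities `p̂_{t,i} = ‖g_{t,i}‖/Σ_j ‖g_{t,j}‖`, weights `ŵ_{t,i} = 1/(n p̂_{t,i})`, and
step sizes `α_t = 1/√t`, given the sup-norm gradient bound `G`:
`Σ_t (α_t/2) Σ_i p̂ ŵ² ‖g‖² ≤ d G² (√T − 1/2) − Σ_t (α_t/2) Var_n(‖g_{t,i}‖₂)`. -/
theorem stmt_10 (d n : ℕ) (hn : 0 < n) (T : ℕ) (hT : 1 ≤ T) (G : ℝ) (hG : 0 ≤ G)
    (g : ℕ → Fin n → EuclideanSpace ℝ (Fin d))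
    (hgne : ∀ t ∈ Finset.Icc 1 T, ∀ i, g t i ≠ 0)
    (hgb : ∀ t ∈ Finset.Icc 1 T, ∀ i, ∀ h : Fin d, |g t i h| ≤ G)
    (phat : ℕ → Fin n → ℝ)
    (hphat : ∀ t i, phat t i = ‖g t i‖ / ∑ j, ‖g t j‖)
    (what : ℕ → Fin n → ℝ)
    (hwhat : ∀ t i, what t i = 1 / ((n : ℝ) * phat t i)) :
    ∑ t ∈ Finset.Icc 1 T, ((1 / Real.sqrt t) / 2) *
        ∑ i, phat t i * (what t i) ^ 2 * ‖g t i‖ ^ 2 ≤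
      (d : ℝ) * G ^ 2 * (Real.sqrt T - 1 / 2) -
        ∑ t ∈ Finset.Icc 1 T, ((1 / Real.sqrt t) / 2) *
          ((1 / (n : ℝ)) * ∑ i, (‖g t i‖ - (1 / (n : ℝ)) * ∑ j, ‖g t j‖) ^ 2) := by
  have hbd : ∀ t ∈ Finset.Icc 1 T, ∀ i, ‖g t i‖ ^ 2 ≤ (d : ℝ) * G ^ 2 := by
    intro t ht i
    rw [EuclideanSpace.norm_sq_eq]
    have := Finset.sum_le_sum (fun h (_ : h ∈ Finset.univ) =>
      pow_le_pow_left₀ (abs_nonneg _) (hgb t ht i h) 2)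
    simpa using this
  rw [le_sub_iff_add_le, ← Finset.sum_add_distrib]
  calc _ ≤ ∑ t ∈ Finset.Icc 1 T, ((1 / Real.sqrt t) / 2) * ((d : ℝ) * G ^ 2) := by
        refine Finset.sum_le_sum fun t ht => ?_
        rw [← mul_add]
        refine mul_le_mul_of_nonneg_left ?_ (by positivity)
        simp only [hwhat, hphat]
        exact aux_var n hn (fun i => ‖g t i‖) (fun i => norm_pos_iff.mpr (hgne t ht i)) _
          (hbd t ht)
    _ = (d : ℝ) * G ^ 2 * ∑ t ∈ Finset.Icc 1 T, ((1 / Real.sqrt t) / 2) := by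
        rw [← Finset.sum_mul, mul_comm]
    _ ≤ _ := mul_le_mul_of_nonneg_left (aux_harm T hT) (by positivity)
end

section
/- Let Θ ⊆ ℝ^d be convex, f₁, …, f_n : ℝ^d → ℝ convex and differentiable, θ, θ* ∈ Θ, α > 0, 0 ≤ β₁ < 1, m' ∈ ℝ^d (the previous first-moment vector), and let p ∈ ℝ^n be a probability vector with p_i > 0, Σ p_i = 1, and weights w_i = 1/(n p_i). For each i let v̂_i ∈ ℝ^d have strictly positive entries, set m_i = β₁ m' + (1 − β₁) ∇f_i(θ), and let θ'_i ∈ Θ satisfy ‖v̂_i^{1/4} ⊙ (θ'_i − z_i)‖₂ ≤ ‖v̂_i^{1/4} ⊙ (u − z_i)‖₂ for all u ∈ Θ, where z_i = θ − α w_i (m_i / √(v̂_i)) (componentwise division). Then, with f = (1/n) Σ_i f_i: (1 − β₁)( f(θ) − f(θ*) ) ≤ (α/2) Σ_i p_i w_i² ‖v̂_i^{−1/4} ⊙ m_i‖₂² + (1/(2α)) Σ_i p_i ( ‖v̂_i^{1/4} ⊙ (θ − θ*)‖₂² − ‖v̂_i^{1/4} ⊙ (θ'_i − θ*)‖₂²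 ) + β₁ Σ_i p_i ( (α/2) ‖v̂_i^{−1/4} ⊙ m'‖₂² + (1/(2α)) ‖v̂_i^{1/4} ⊙ (θ − θ*)‖₂² ). -/
lemma quad_aux (B C : ℝ) (h : ∀ t : ℝ, 0 < t → t ≤ 1 → 0 ≤ 2 * t * B + t ^ 2 * C) : 0 ≤ B := by
  by_contra hB
  push Not at hB
  have hC : 0 < C := by
    have := h 1 one_pos le_rfl
    linarith
  have h1 := h (min 1 (-B / C)) (lt_min one_pos (div_pos (by linarith) hC)) (min_le_left _ _)
  have h2 : min 1 (-B / C) * C ≤ -B := by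
    have := min_le_right 1 (-B / C)
    rwa [le_div_iff₀ hC] at this
  have h3 : 0 < min 1 (-B / C) := lt_min one_pos (div_pos (by linarith) hC)
  nlinarith [mul_pos h3 (neg_pos.2 hB)]

lemma proj_aux {d : ℕ} (Θ : Set (EuclideanSpace ℝ (Fin d))) (hΘ : Convex ℝ Θ)
    (s : Fin d → ℝ) (hs : ∀ h, 0 < s h) (a b z : EuclideanSpace ℝ (Fin d))
    (ha : a ∈ Θ) (hb : b ∈ Θ)
    (hproj : ∀ u ∈ Θ, Real.sqrt (∑ h, s h * (a h - z h) ^ 2) ≤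
        Real.sqrt (∑ h, s h * (u h - z h) ^ 2)) :
    ∑ h, s h * (a h - b h) ^ 2 ≤ ∑ h, s h * (z h - b h) ^ 2 := by
  have hB : 0 ≤ ∑ h, s h * ((a h - z h) * (b h - a h)) := by
    apply quad_aux _ (∑ h, s h * (b h - a h) ^ 2)
    intro t ht ht1
    have hu := hproj ((1 - t) • a + t • b) (hΘ ha hb (by linarith) ht.le (by ring))
    rw [Real.sqrt_le_sqrt_iff
      (Finset.sum_nonneg fun h _ => mul_nonneg (hs h).le (sq_nonneg _))] at hu
    have e : ∑ h, s h * (((1 - t) • a + t • b) h - z h) ^ 2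
        = ∑ h, s h * (a h - z h) ^ 2 + (2 * t * ∑ h, s h * ((a h - z h) * (b h - a h))
          + t ^ 2 * ∑ h, s h * (b h - a h) ^ 2) := by
      simp only [Finset.mul_sum, ← Finset.sum_add_distrib]
      refine Finset.sum_congr rfl fun h _ => ?_
      simp
      ring
    linarith
  have e : ∑ h, s h * (z h - b h) ^ 2 = ∑ h, s h * (a h - b h) ^ 2
      + (2 * ∑ h, s h * ((a h - z h) * (b h - a h)) + ∑ h, s h * (a h - z h) ^ 2) := by
    simp only [Finset.mul_sum, ← Finset.sum_add_distrib]
    refine Finset.sum_congr rfl fun h _ => ?_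
    ring
  have : 0 ≤ ∑ h, s h * (a h - z h) ^ 2 :=
    Finset.sum_nonneg fun h _ => mul_nonneg (hs h).le (sq_nonneg _)
  linarith

lemma grad_aux {d : ℕ} (f : EuclideanSpace ℝ (Fin d) → ℝ) (hc : ConvexOn ℝ Set.univ f)
    (hd : Differentiable ℝ f) (x y : EuclideanSpace ℝ (Fin d)) :
    f x - f y ≤ ∑ h, gradient f x h * (x h - y h) := by
  have h1 : ConvexOn ℝ Set.univ (f ∘ AffineMap.lineMap (k := ℝ) x y) := by
    simpa using hc.comp_affineMap (AffineMap.lineMap (k := ℝ) x y)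
  have h2 : HasDerivAt (f ∘ AffineMap.lineMap (k := ℝ) x y) (fderiv ℝ f x (y - x)) 0 := by
    have := (hd (AffineMap.lineMap (k := ℝ) x y (0:ℝ))).hasFDerivAt.comp_hasDerivAt (0:ℝ)
      (AffineMap.hasDerivAt_lineMap (a := x) (b := y) (x := (0:ℝ)))
    simpa using this
  have h3 := h1.le_slope_of_hasDerivAt (Set.mem_univ 0) (Set.mem_univ 1) one_pos h2
  have h4 : fderiv ℝ f x (y - x) = inner ℝ (gradient f x) (y - x) := by
    simp [gradient]
  rw [h4, PiLp.inner_apply] at h3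
  simp [slope_def_field, -Finset.sum_sub_distrib] at h3
  have : ∑ h, gradient f x h * (x h - y h) = - ∑ h, (y h - x h) * gradient f x h := by
    rw [← Finset.sum_neg_distrib]
    exact Finset.sum_congr rfl fun h _ => by ring
  linarith

/-- per-step inequality for DASGrad (Theorem 4 of the paper; Theorem 3 is the
uniform-probability case).  `m_i = β₁ m' + (1−β₁) ∇f_i(θ)`, `z_i = θ − α w_i (m_i/√v̂_i)`, and
`θ'_i` is the projection of `z_i` onto `Θ` in the norm weighted by `diag(√v̂_i)`.  Weighted
squared norms are written out as `‖v^{1/4}⊙x‖₂² = Σ_h √(v_h) x_h²` and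
`‖v^{−1/4}⊙x‖₂² = Σ_h x_h²/√(v_h)`. -/
theorem stmt_12 (d n : ℕ) (hn : 0 < n)
    (Θ : Set (EuclideanSpace ℝ (Fin d))) (hΘconv : Convex ℝ Θ)
    (f : Fin n → EuclideanSpace ℝ (Fin d) → ℝ)
    (hconv : ∀ i, ConvexOn ℝ Set.univ (f i))
    (hdiff : ∀ i, Differentiable ℝ (f i))
    (θ θstar : EuclideanSpace ℝ (Fin d)) (hθ : θ ∈ Θ) (hθstar : θstar ∈ Θ)
    (α : ℝ) (hα : 0 < α)
    (β₁ : ℝ) (hβ₁0 : 0 ≤ β₁) (hβ₁1 : β₁ < 1)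
    (m' : EuclideanSpace ℝ (Fin d))  -- previous first-moment vector
    (p : Fin n → ℝ) (hp : ∀ i, 0 < p i) (hpsum : ∑ i, p i = 1)
    (w : Fin n → ℝ) (hw : ∀ i, w i = 1 / ((n : ℝ) * p i))
    (vhat : Fin n → Fin d → ℝ) (hvhat : ∀ i h, 0 < vhat i h)
    (m : Fin n → EuclideanSpace ℝ (Fin d))
    (hm : ∀ i, m i = β₁ • m' + (1 - β₁) • gradient (f i) θ)
    (z : Fin n → EuclideanSpace ℝ (Fin d))
    (hz : ∀ i (h : Fin d), z i h = θ h - α * w i * (m i h / Real.sqrt (vhat i h)))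
    (θ' : Fin n → EuclideanSpace ℝ (Fin d))
    (hmem : ∀ i, θ' i ∈ Θ)
    (hproj : ∀ i, ∀ u ∈ Θ,
      Real.sqrt (∑ h, Real.sqrt (vhat i h) * (θ' i h - z i h) ^ 2) ≤
        Real.sqrt (∑ h, Real.sqrt (vhat i h) * (u h - z i h) ^ 2)) :
    (1 - β₁) * ((1 / (n : ℝ)) * ∑ i, f i θ - (1 / (n : ℝ)) * ∑ i, f i θstar) ≤
      (α / 2) * (∑ i, p i * (w i) ^ 2 * ∑ h, (m i h) ^ 2 / Real.sqrt (vhat i h)) +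
      (1 / (2 * α)) * (∑ i, p i *
        ((∑ h, Real.sqrt (vhat i h) * (θ h - θstar h) ^ 2) -
         (∑ h, Real.sqrt (vhat i h) * (θ' i h - θstar h) ^ 2))) +
      β₁ * (∑ i, p i *
        ((α / 2) * (∑ h, (m' h) ^ 2 / Real.sqrt (vhat i h)) +
         (1 / (2 * α)) * (∑ h, Real.sqrt (vhat i h) * (θ h - θstar h) ^ 2))) := by
  have hn' : (0:ℝ) < n := by exact_mod_cast hn
  have hs : ∀ i h, 0 < Real.sqrt (vhat i h) := fun i h => Real.sqrt_pos.2 (hvhat i h)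
  set s : Fin n → Fin d → ℝ := fun i h => Real.sqrt (vhat i h) with hsdef
  have key : ∀ i, (1 - β₁) * ((1 / (n : ℝ)) * (f i θ - f i θstar))
        + β₁ * (1 / (n : ℝ)) * ∑ h, m' h * (θ h - θstar h) ≤
      (α / 2) * (p i * (w i) ^ 2 * ∑ h, (m i h) ^ 2 / s i h) +
      (1 / (2 * α)) * (p i * ((∑ h, s i h * (θ h - θstar h) ^ 2) -
         (∑ h, s i h * (θ' i h - θstar h) ^ 2))) := by
    intro i
    have h1 := proj_aux Θ hΘconv (s i) (hs i) (θ' i) θstar (z i) (hmem i) hθstar (hproj i)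
    have h2 := grad_aux (f i) (hconv i) (hdiff i) θ θstar
    have h3 : ∑ h, s i h * (z i h - θstar h) ^ 2 = ∑ h, s i h * (θ h - θstar h) ^ 2
        - 2 * α * w i * ∑ h, m i h * (θ h - θstar h)
        + α ^ 2 * w i ^ 2 * ∑ h, (m i h) ^ 2 / s i h := by
      simp only [Finset.mul_sum, ← Finset.sum_add_distrib, ← Finset.sum_sub_distrib]
      refine Finset.sum_congr rfl fun h _ => ?_
      have := (hs i h).ne'
      rw [hz]
      change s i h * (θ h - α * w i * (m i h / s i h) - θstar h) ^ 2 = _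
      change s i h ≠ 0 at this
      field_simp
      ring
    have h4 : ∑ h, m i h * (θ h - θstar h) = β₁ * ∑ h, m' h * (θ h - θstar h)
        + (1 - β₁) * ∑ h, gradient (f i) θ h * (θ h - θstar h) := by
      simp only [Finset.mul_sum, ← Finset.sum_add_distrib]
      refine Finset.sum_congr rfl fun h _ => ?_
      rw [hm]
      simp
      ring
    have hpw : p i * w i = 1 / n := by
      rw [hw]
      have := (hp i).ne'
      field_simp
    rw [h3] at h1
    generalize ∑ h, s i h * (θ h - θstar h) ^ 2 = A at *
    generalize ∑ h, s i h * (θ' i h - θstar h) ^ 2 = A' at *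
    generalize ∑ h, (m i h) ^ 2 / s i h = M at *
    generalize ∑ h, m i h * (θ h - θstar h) = I at *
    generalize ∑ h, gradient (f i) θ h * (θ h - θstar h) = G at *
    generalize ∑ h, m' h * (θ h - θstar h) = J at *
    have h5 : (1 / (n:ℝ)) * I ≤ (α / 2) * (p i * (w i) ^ 2 * M) + 1 / (2 * α) * (p i * (A - A')) := by
      rw [← hpw]
      have h6 := mul_le_mul_of_nonneg_left h1 (mul_pos (one_div_pos.2 (mul_pos two_pos hα)) (hp i)).le
      have h7 : 1 / (2 * α) * p i * (A - 2 * α * w i * I + α ^ 2 * w i ^ 2 * M)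
          = 1 / (2 * α) * p i * A - p i * w i * I + (α / 2) * (p i * (w i) ^ 2 * M) := by
        field_simp
      linarith
    have h8 := mul_le_mul_of_nonneg_left h2
      (mul_nonneg (sub_nonneg.2 hβ₁1.le) (one_div_pos.2 hn').le)
    rw [h4] at h5
    linarith
  have key2 : ∀ i, - (∑ h, m' h * (θ h - θstar h)) ≤
      (α / 2) * (∑ h, (m' h) ^ 2 / s i h) +
         (1 / (2 * α)) * (∑ h, s i h * (θ h - θstar h) ^ 2) := by
    intro i
    rw [← Finset.sum_neg_distrib]
    simp only [Finset.mul_sum, ← Finset.sum_add_distrib]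
    refine Finset.sum_le_sum fun h _ => ?_
    have hpos : 0 < s i h := hs i h
    have e : (α / 2) * ((m' h) ^ 2 / s i h) + (1 / (2 * α)) * (s i h * (θ h - θstar h) ^ 2)
        - -(m' h * (θ h - θstar h))
        = (α * m' h + s i h * (θ h - θstar h)) ^ 2 / (2 * α * s i h) := by
      field_simp
      ring
    have : 0 ≤ (α * m' h + s i h * (θ h - θstar h)) ^ 2 / (2 * α * s i h) := by positivity
    linarith
  have S1 := Finset.sum_le_sum fun i (_ : i ∈ Finset.univ) => key i
  have S2 := Finset.sum_le_sum fun i (_ : i ∈ Finset.univ) =>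
    mul_le_mul_of_nonneg_left (key2 i) (hp i).le
  rw [← Finset.sum_mul, hpsum, one_mul] at S2
  simp only [Finset.sum_add_distrib, ← Finset.mul_sum, Finset.sum_sub_distrib, Finset.sum_const,
    Finset.card_univ, Fintype.card_fin, nsmul_eq_mul] at S1
  have e1 : (n:ℝ) * (β₁ * (1 / (n : ℝ)) * ∑ h, m' h * (θ h - θstar h))
      = β₁ * ∑ h, m' h * (θ h - θstar h) := by
    field_simp
  have S3 := mul_le_mul_of_nonneg_left S2 hβ₁0
  rw [← mul_sub]
  linarith
end

section
/- Let T ≥ 1, α > 0, 0 ≤ β₁ < 1, α_t = α/√t, and D ≥ 0. Let v̂₁, …, v̂_T ∈ ℝ^d have strictly positive entries and be componentwise nondecreasing (v̂_{t−1,h} ≤ v̂_{t,h} for all t, h), and let θ₁, …, θ_{T+1}, θ* ∈ ℝ^d satisfy |θ_{t,h} − θ*_h| ≤ D for all t ∈ {1, …, T+1} and all h. Then Σ_{t=1}^T (1/(2α_t(1−β₁))) ( ‖v̂_t^{1/4} ⊙ (θ_t − θ*)‖₂² − ‖v̂_t^{1/4} ⊙ (θ_{t+1} − θ*)‖₂²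 ) ≤ (D² √T / (2α(1−β₁))) Σ_{h=1}^d √(v̂_{T,h}). -/
theorem tele_aux (w a : ℕ → ℝ) (C : ℝ) (T : ℕ)
    (hw : ∀ t, 1 ≤ t → t ≤ T → 0 ≤ w t)
    (hm : ∀ t, 1 ≤ t → t < T → w t ≤ w (t + 1))
    (ha : ∀ t, 1 ≤ t → t ≤ T + 1 → a t ≤ C) (n : ℕ) (hn : 1 ≤ n) (hnT : n ≤ T) :
    ∑ t ∈ Finset.Icc 1 n, w t * (a t - a (t + 1)) ≤ w n * (C - a (n + 1)) := by
  induction n, hn using Nat.le_induction with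
  | base =>
    simp only [Finset.Icc_self, Finset.sum_singleton]
    exact mul_le_mul_of_nonneg_left (by linarith [ha 1 le_rfl (by omega)]) (hw 1 le_rfl hnT)
  | succ n hn ih =>
    rw [Finset.sum_Icc_succ_top (by omega)]
    have h1 := ih (by omega)
    have h2 := mul_le_mul_of_nonneg_right (hm n hn (by omega))
      (sub_nonneg.2 (ha (n + 1) (by omega) (by omega)))
    linarith

/-- Lemma D.1 of the paper: AMSGrad/DASGrad potential telescoping bound.
With `α_t = α/√t`, componentwise nondecreasing positive vectors `v̂_t`, and
`|θ_{t,h} − θ*_h| ≤ D`: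
`Σ_{t=1}^T (1/(2α_t(1−β₁))) (‖v̂_t^{1/4}⊙(θ_t−θ*)‖₂² − ‖v̂_t^{1/4}⊙(θ_{t+1}−θ*)‖₂²)
  ≤ (D²√T/(2α(1−β₁))) Σ_h √(v̂_{T,h})`. -/
theorem stmt_13 (d : ℕ) (T : ℕ) (hT : 1 ≤ T) (α : ℝ) (hα : 0 < α)
    (β₁ : ℝ) (hβ₁0 : 0 ≤ β₁) (hβ₁1 : β₁ < 1) (D : ℝ) (hD : 0 ≤ D)
    (vhat : ℕ → Fin d → ℝ)
    (hvpos : ∀ t, 1 ≤ t → t ≤ T → ∀ h, 0 < vhat t h)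
    (hvmono : ∀ t, 1 ≤ t → t < T → ∀ h, vhat t h ≤ vhat (t + 1) h)
    (θ : ℕ → Fin d → ℝ) (θstar : Fin d → ℝ)
    (hθ : ∀ t, 1 ≤ t → t ≤ T + 1 → ∀ h, |θ t h - θstar h| ≤ D) :
    ∑ t ∈ Finset.Icc 1 T, (1 / (2 * (α / Real.sqrt t) * (1 - β₁))) *
        ((∑ h, Real.sqrt (vhat t h) * (θ t h - θstar h) ^ 2) -
         (∑ h, Real.sqrt (vhat t h) * (θ (t + 1) h - θstar h) ^ 2)) ≤
      (D ^ 2 * Real.sqrt T / (2 * α * (1 - β₁))) * ∑ h, Real.sqrt (vhat T h) := by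
  have hb : 0 < 1 - β₁ := by linarith
  have key : ∀ h, ∑ t ∈ Finset.Icc 1 T, (Real.sqrt t * Real.sqrt (vhat t h)) *
      ((θ t h - θstar h) ^ 2 - (θ (t + 1) h - θstar h) ^ 2) ≤
      D ^ 2 * Real.sqrt T * Real.sqrt (vhat T h) := by
    intro h
    have := tele_aux (fun t => Real.sqrt t * Real.sqrt (vhat t h))
      (fun t => (θ t h - θstar h) ^ 2) (D ^ 2) T (fun t _ _ => by positivity)
      (fun t h1 h2 => mul_le_mul (Real.sqrt_le_sqrt (by push_cast; linarith))
        (Real.sqrt_le_sqrt (hvmono t h1 h2 h)) (by positivity) (by positivity))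
      (fun t h1 h2 => sq_le_sq' (abs_le.1 (hθ t h1 h2 h)).1 (abs_le.1 (hθ t h1 h2 h)).2)
      T hT le_rfl
    refine this.trans ?_
    have h3 : 0 ≤ (Real.sqrt T * Real.sqrt (vhat T h)) * (θ (T + 1) h - θstar h) ^ 2 := by
      positivity
    linarith
  have hsum := Finset.sum_le_sum (fun h (_ : h ∈ Finset.univ) => key h)
  rw [Finset.sum_comm] at hsum
  have hc : 0 ≤ 1 / (2 * α * (1 - β₁)) := by positivity
  have := mul_le_mul_of_nonneg_left hsum hc
  refine le_of_eq_of_le ?_ (this.trans_eq ?_)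
  · rw [Finset.mul_sum]
    refine Finset.sum_congr rfl fun t ht => ?_
    have ht1 : 1 ≤ t := (Finset.mem_Icc.1 ht).1
    have hs : 0 < Real.sqrt t := Real.sqrt_pos.2 (by exact_mod_cast ht1)
    have e : 1 / (2 * (α / Real.sqrt t) * (1 - β₁)) =
        1 / (2 * α * (1 - β₁)) * Real.sqrt t := by
      field_simp
    rw [e, ← Finset.sum_sub_distrib, mul_assoc, Finset.mul_sum]
    congr 1
    exact Finset.sum_congr rfl fun h _ => by ring
  · rw [← Finset.mul_sum]
    ring
end

section
/- Let g₁, …, g_t ∈ ℝ^d, let 0 ≤ β_{1,τ} ≤ β₁ < 1 for τ = 1, …, t, let 0 < β₂ < 1, and set γ = β₁/√β₂. Define m₀ = 0, m_τ = β_{1,τ} m_{τ−1} + (1 − β_{1,τ}) g_τ, and v₀ = 0, v_τ = β₂ v_{τ−1} + (1 − β₂) g_τ² (componentwise square). Then, with the convention that a term m_{t,h}²/√(v_{t,h}) is 0 whenever v_{t,h} = 0: Σ_{h=1}^d m_{t,h}² / √(v_{t,h}) ≤ ( 1 / ((1−β₁) √(1−β₂)) ) Σ_{τ=1}^t γ^{t−τ}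 ‖g_τ‖₁. -/
/-- single-step moment bound inside Lemma D.5, after Kingma & Ba and Reddi
et al.:  with `m_τ = β_{1,τ} m_{τ−1} + (1−β_{1,τ}) g_τ`, `v_τ = β₂ v_{τ−1} + (1−β₂) g_τ²`,
`0 ≤ β_{1,τ} ≤ β₁ < 1`, `0 < β₂ < 1` and `γ = β₁/√β₂`:
`Σ_h m_{t,h}²/√(v_{t,h}) ≤ (1/((1−β₁)√(1−β₂))) Σ_{τ=1}^t γ^{t−τ} ‖g_τ‖₁`.
(Division by zero in Lean is zero, matching the convention that terms with `v_{t,h} = 0`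
vanish.) -/
theorem stmt_14 (d : ℕ) (t : ℕ) (ht : 1 ≤ t)
    (g : ℕ → Fin d → ℝ)
    (β1 : ℕ → ℝ) (β₁ : ℝ) (hβ1 : ∀ τ, 1 ≤ τ → τ ≤ t → 0 ≤ β1 τ ∧ β1 τ ≤ β₁)
    (hβ₁ : β₁ < 1) (hβ₁0 : 0 ≤ β₁)
    (β₂ : ℝ) (hβ₂0 : 0 < β₂) (hβ₂1 : β₂ < 1)
    (γ : ℝ) (hγ : γ = β₁ / Real.sqrt β₂)
    (m v : ℕ → Fin d → ℝ)
    (hm0 : ∀ h, m 0 h = 0) (hv0 : ∀ h, v 0 h = 0)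
    (hm : ∀ τ, 1 ≤ τ → τ ≤ t → ∀ h, m τ h = β1 τ * m (τ - 1) h + (1 - β1 τ) * g τ h)
    (hv : ∀ τ, 1 ≤ τ → τ ≤ t → ∀ h, v τ h = β₂ * v (τ - 1) h + (1 - β₂) * (g τ h) ^ 2) :
    ∑ h, (m t h) ^ 2 / Real.sqrt (v t h) ≤
      (1 / ((1 - β₁) * Real.sqrt (1 - β₂))) *
        ∑ τ ∈ Finset.Icc 1 t, γ ^ (t - τ) * ∑ h, |g τ h| := by
  have hγ0 : 0 ≤ γ := by rw [hγ]; positivity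
  have hs2 : 0 < Real.sqrt β₂ := Real.sqrt_pos.2 hβ₂0
  have hγs : γ * Real.sqrt β₂ = β₁ := by rw [hγ]; field_simp
  have hs1 : 0 < Real.sqrt (1 - β₂) := Real.sqrt_pos.2 (by linarith)
  have key : ∀ h, ∀ n, n ≤ t → 0 ≤ v n h ∧ (m n h) ^ 2 * Real.sqrt (1 - β₂) ≤
      Real.sqrt (v n h) * ∑ τ ∈ Finset.Icc 1 n, γ ^ (n - τ) * |g τ h| := by
    intro h n
    induction n with
    | zero => intro _; simp [hm0, hv0]
    | succ n ih =>
      intro hn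
      obtain ⟨hvn, ihm⟩ := ih (by omega)
      have em := hm (n + 1) (by omega) hn h
      have ev := hv (n + 1) (by omega) hn h
      obtain ⟨b0, b1⟩ := hβ1 (n + 1) (by omega) hn
      simp only [Nat.add_sub_cancel] at em ev
      have hg2 : 0 ≤ (1 - β₂) * (g (n + 1) h) ^ 2 :=
        mul_nonneg (by linarith) (sq_nonneg _)
      have hbv : 0 ≤ β₂ * v n h := by positivity
      refine ⟨by rw [ev]; linarith, ?_⟩
      have l1 : Real.sqrt β₂ * Real.sqrt (v n h) ≤ Real.sqrt (v (n + 1) h) := by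
        rw [← Real.sqrt_mul hβ₂0.le]
        exact Real.sqrt_le_sqrt (by linarith)
      have l2 : Real.sqrt (1 - β₂) * |g (n + 1) h| ≤ Real.sqrt (v (n + 1) h) := by
        rw [← Real.sqrt_sq_eq_abs, ← Real.sqrt_mul (by linarith)]
        exact Real.sqrt_le_sqrt (by linarith)
      have hS : ∑ τ ∈ Finset.Icc 1 (n + 1), γ ^ (n + 1 - τ) * |g τ h| =
          γ * (∑ τ ∈ Finset.Icc 1 n, γ ^ (n - τ) * |g τ h|) + |g (n + 1) h| := by
        rw [Finset.sum_Icc_succ_top (by omega), Finset.mul_sum]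
        congr 1
        · refine Finset.sum_congr rfl fun τ hτ => ?_
          rw [Nat.succ_sub (Finset.mem_Icc.1 hτ).2, pow_succ]
          ring
        · simp
      rw [hS]
      have hS0 : 0 ≤ ∑ τ ∈ Finset.Icc 1 n, γ ^ (n - τ) * |g τ h| :=
        Finset.sum_nonneg fun τ _ => by positivity
      generalize (∑ τ ∈ Finset.Icc 1 n, γ ^ (n - τ) * |g τ h|) = S at *
      have c : (m (n + 1) h) ^ 2 ≤ β₁ * (m n h) ^ 2 + |g (n + 1) h| ^ 2 := by
        rw [em, sq_abs]
        nlinarith [mul_nonneg (mul_nonneg b0 (by linarith : 0 ≤ 1 - β1 (n + 1)))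
          (sq_nonneg (m n h - g (n + 1) h)), mul_nonneg b0 (sq_nonneg (g (n + 1) h)),
          mul_nonneg (sub_nonneg.2 b1) (sq_nonneg (m n h))]
      calc (m (n + 1) h) ^ 2 * Real.sqrt (1 - β₂)
          ≤ (β₁ * (m n h) ^ 2 + |g (n + 1) h| ^ 2) * Real.sqrt (1 - β₂) := by gcongr
        _ = β₁ * ((m n h) ^ 2 * Real.sqrt (1 - β₂))
            + (Real.sqrt (1 - β₂) * |g (n + 1) h|) * |g (n + 1) h| := by ring
        _ ≤ β₁ * (Real.sqrt (v n h) * S) + Real.sqrt (v (n + 1) h) * |g (n + 1) h| := by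
            gcongr
        _ = γ * (Real.sqrt β₂ * Real.sqrt (v n h)) * S
            + Real.sqrt (v (n + 1) h) * |g (n + 1) h| := by rw [← hγs]; ring
        _ ≤ γ * Real.sqrt (v (n + 1) h) * S
            + Real.sqrt (v (n + 1) h) * |g (n + 1) h| := by gcongr
        _ = _ := by ring
  have hsum : ∑ τ ∈ Finset.Icc 1 t, γ ^ (t - τ) * ∑ h, |g τ h| =
      ∑ h, ∑ τ ∈ Finset.Icc 1 t, γ ^ (t - τ) * |g τ h| := by
    simp only [Finset.mul_sum]
    exact Finset.sum_comm
  rw [hsum, Finset.mul_sum]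
  refine Finset.sum_le_sum fun h _ => ?_
  have k := (key h t le_rfl).2
  have hS0 : 0 ≤ ∑ τ ∈ Finset.Icc 1 t, γ ^ (t - τ) * |g τ h| :=
    Finset.sum_nonneg fun τ _ => by positivity
  generalize (∑ τ ∈ Finset.Icc 1 t, γ ^ (t - τ) * |g τ h|) = S at *
  have h1 : 0 < 1 - β₁ := by linarith
  rcases (Real.sqrt_nonneg (v t h)).eq_or_lt with h0 | h0
  · rw [← h0, div_zero]
    positivity
  · rw [one_div_mul_eq_div, div_le_div_iff₀ h0 (by positivity)]
    have h2 : 0 ≤ (m t h) ^ 2 * Real.sqrt (1 - β₂) := by positivity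
    nlinarith [mul_nonneg hβ₁0 h2]
end

section
/- Let T ≥ 1, α > 0, 0 < β₂ < 1, and for each t let 0 ≤ β_{1,t} ≤ β₁ < 1 with γ = β₁/√β₂ < 1; set α_t = α/√t. Let g₁, …, g_T ∈ ℝ^d and define m₀ = 0, m_t = β_{1,t} m_{t−1} + (1 − β_{1,t}) g_t, v₀ = 0, v_t = β₂ v_{t−1} + (1 − β₂) g_t² (componentwise square). Then, with the convention that terms with v_{t,h} = 0 are 0: Σ_{t=1}^T ( α_t / (2(1−β_{1,t})) ) Σ_{h=1}^d m_{t,h}²/√(v_{t,h}) ≤ ( α √(1 + log T) / ( 2 (1−β₁)² √(1−β₂) (1−γ) ) ) Σ_{h=1}^d √( Σ_{t=1}^T g_{t,h}² ). -/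
/-- geometric accumulation of absolute gradients -/
noncomputable def accS (γ : ℝ) (a : ℕ → ℝ) : ℕ → ℝ
  | 0 => 0
  | n + 1 => γ * accS γ a n + |a (n + 1)|

lemma accS_nonneg (γ : ℝ) (hγ : 0 ≤ γ) (a : ℕ → ℝ) (n : ℕ) : 0 ≤ accS γ a n := by
  induction n with
  | zero => simp [accS]
  | succ n ih => simp only [accS]; positivity

lemma accS_sum (γ : ℝ) (hγ : 0 ≤ γ) (a : ℕ → ℝ) (n : ℕ) :
    (1 - γ) * ∑ t ∈ Finset.Icc 1 n, accS γ a t / √(t : ℝ) + γ * (accS γ a n / √(n : ℝ)) ≤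
      ∑ t ∈ Finset.Icc 1 n, |a t| * (1 / √(t : ℝ)) := by
  induction n with
  | zero => simp
  | succ n ih =>
    rw [Finset.sum_Icc_succ_top (by omega), Finset.sum_Icc_succ_top (by omega)]
    have key : accS γ a n / √((n + 1 : ℕ) : ℝ) ≤ accS γ a n / √(n : ℝ) := by
      rcases Nat.eq_zero_or_pos n with h | h
      · subst h; simp [accS]
      · have h1 : (0 : ℝ) < n := by exact_mod_cast h
        have := accS_nonneg γ hγ a n
        gcongr
        omega
    have e : accS γ a (n + 1) / √((n + 1 : ℕ) : ℝ) =
        γ * (accS γ a n / √((n + 1 : ℕ) : ℝ)) + |a (n + 1)| * (1 / √((n + 1 : ℕ) : ℝ)) := by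
      simp only [accS]; ring
    have := mul_le_mul_of_nonneg_left key hγ
    linarith

lemma cs_bound (a : ℕ → ℝ) (T : ℕ) :
    ∑ t ∈ Finset.Icc 1 T, |a t| * (1 / √(t : ℝ)) ≤
      √(1 + Real.log T) * √(∑ t ∈ Finset.Icc 1 T, (a t) ^ 2) := by
  have h := Real.sum_mul_le_sqrt_mul_sqrt (Finset.Icc 1 T) (fun t => |a t|)
    (fun t => 1 / √(t : ℝ))
  have h2 : ∑ t ∈ Finset.Icc 1 T, (1 / √(t : ℝ)) ^ 2 ≤ 1 + Real.log T := by
    have h3 := harmonic_le_one_add_log T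
    rw [harmonic_eq_sum_Icc] at h3
    push_cast at h3
    refine le_trans (le_of_eq ?_) h3
    refine Finset.sum_congr rfl fun t _ => ?_
    rw [div_pow, Real.sq_sqrt (by positivity)]
    simp
  simp only [sq_abs] at h
  rw [mul_comm (√(1 + Real.log T))]
  refine h.trans ?_
  gcongr

lemma m_bound (T : ℕ) (β₂ : ℝ) (hβ₂0 : 0 < β₂) (hβ₂1 : β₂ < 1)
    (β1 : ℕ → ℝ) (β₁ : ℝ) (hβ1 : ∀ t, 1 ≤ t → t ≤ T → 0 ≤ β1 t ∧ β1 t ≤ β₁)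
    (hβ₁0 : 0 ≤ β₁) (hβ₁1 : β₁ < 1)
    (γ : ℝ) (hγ : γ = β₁ / Real.sqrt β₂)
    (g m v : ℕ → ℝ) (hm0 : m 0 = 0) (hv0 : v 0 = 0)
    (hm : ∀ t, 1 ≤ t → t ≤ T → m t = β1 t * m (t - 1) + (1 - β1 t) * g t)
    (hv : ∀ t, 1 ≤ t → t ≤ T → v t = β₂ * v (t - 1) + (1 - β₂) * (g t) ^ 2)
    (n : ℕ) (hn : n ≤ T) :
    0 ≤ v n ∧ √(1 - β₂) * m n ^ 2 ≤ accS γ g n * √(v n) := by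
  have hs : 0 < √β₂ := Real.sqrt_pos.2 hβ₂0
  have hγ0 : 0 ≤ γ := by rw [hγ]; positivity
  induction n with
  | zero => simp [hm0, hv0]
  | succ n ih =>
    obtain ⟨ihv, ih⟩ := ih (by omega)
    have ev := hv (n + 1) (by omega) hn
    have em := hm (n + 1) (by omega) hn
    obtain ⟨hb0, hb1⟩ := hβ1 (n + 1) (by omega) hn
    simp only [Nat.add_sub_cancel] at ev em
    have p1 : 0 ≤ β₂ * v n := by positivity
    have p2 : 0 ≤ (1 - β₂) * g (n + 1) ^ 2 := mul_nonneg (by linarith) (sq_nonneg _)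
    refine ⟨by rw [ev]; linarith, ?_⟩
    have q1 : √β₂ * √(v n) ≤ √(v (n + 1)) := by
      rw [← Real.sqrt_mul hβ₂0.le]
      exact Real.sqrt_le_sqrt (by linarith)
    have q2 : √(1 - β₂) * |g (n + 1)| ≤ √(v (n + 1)) := by
      rw [← Real.sqrt_sq_eq_abs, ← Real.sqrt_mul (by linarith)]
      exact Real.sqrt_le_sqrt (by linarith)
    have q3 : m (n + 1) ^ 2 ≤ β₁ * m n ^ 2 + |g (n + 1)| ^ 2 := by
      rw [em, sq_abs]
      generalize β1 (n + 1) = b at *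
      have a1 : 0 ≤ b * (1 - b) * (m n - g (n + 1)) ^ 2 :=
        mul_nonneg (mul_nonneg hb0 (by linarith)) (sq_nonneg _)
      have a2 : 0 ≤ (β₁ - b) * m n ^ 2 := mul_nonneg (by linarith) (sq_nonneg _)
      have a3 : 0 ≤ b * g (n + 1) ^ 2 := by positivity
      nlinarith
    have hS := accS_nonneg γ hγ0 g n
    have eb : β₁ = γ * √β₂ := by rw [hγ]; field_simp
    calc √(1 - β₂) * m (n + 1) ^ 2
        ≤ √(1 - β₂) * (β₁ * m n ^ 2 + |g (n + 1)| ^ 2) := by gcongr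
      _ = β₁ * (√(1 - β₂) * m n ^ 2) + |g (n + 1)| * (√(1 - β₂) * |g (n + 1)|) := by ring
      _ ≤ β₁ * (accS γ g n * √(v n)) + |g (n + 1)| * √(v (n + 1)) := by gcongr
      _ = γ * accS γ g n * (√β₂ * √(v n)) + |g (n + 1)| * √(v (n + 1)) := by
        rw [eb]; ring
      _ ≤ γ * accS γ g n * √(v (n + 1)) + |g (n + 1)| * √(v (n + 1)) := by gcongr
      _ = accS γ g (n + 1) * √(v (n + 1)) := by simp only [accS]; ring

/-- deterministic core of Lemma D.5: accumulated error bound of adaptive moment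
methods.  With `m_t = β_{1,t} m_{t−1} + (1−β_{1,t}) g_t`, `v_t = β₂ v_{t−1} + (1−β₂) g_t²`,
`0 ≤ β_{1,t} ≤ β₁ < 1`, `γ = β₁/√β₂ < 1` and `α_t = α/√t`:
`Σ_t (α_t/(2(1−β_{1,t}))) Σ_h m_{t,h}²/√(v_{t,h})
  ≤ (α√(1+log T)/(2(1−β₁)²√(1−β₂)(1−γ))) Σ_h √(Σ_t g_{t,h}²)`.
(Division by zero in Lean is zero, matching the convention that terms with `v_{t,h} = 0`
vanish.) -/
theorem stmt_17 (d : ℕ) (T : ℕ) (hT : 1 ≤ T) (α : ℝ) (hα : 0 < α)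
    (β₂ : ℝ) (hβ₂0 : 0 < β₂) (hβ₂1 : β₂ < 1)
    (β1 : ℕ → ℝ) (β₁ : ℝ) (hβ1 : ∀ t, 1 ≤ t → t ≤ T → 0 ≤ β1 t ∧ β1 t ≤ β₁)
    (hβ₁0 : 0 ≤ β₁) (hβ₁1 : β₁ < 1)
    (γ : ℝ) (hγ : γ = β₁ / Real.sqrt β₂) (hγ1 : γ < 1)
    (g : ℕ → Fin d → ℝ)
    (m v : ℕ → Fin d → ℝ)
    (hm0 : ∀ h, m 0 h = 0) (hv0 : ∀ h, v 0 h = 0)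
    (hm : ∀ t, 1 ≤ t → t ≤ T → ∀ h, m t h = β1 t * m (t - 1) h + (1 - β1 t) * g t h)
    (hv : ∀ t, 1 ≤ t → t ≤ T → ∀ h, v t h = β₂ * v (t - 1) h + (1 - β₂) * (g t h) ^ 2) :
    ∑ t ∈ Finset.Icc 1 T, ((α / Real.sqrt t) / (2 * (1 - β1 t))) *
        ∑ h, (m t h) ^ 2 / Real.sqrt (v t h) ≤
      (α * Real.sqrt (1 + Real.log T) /
          (2 * (1 - β₁) ^ 2 * Real.sqrt (1 - β₂) * (1 - γ))) *
        ∑ h, Real.sqrt (∑ t ∈ Finset.Icc 1 T, (g t h) ^ 2) := by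
  have hγ0 : 0 ≤ γ := by rw [hγ]; positivity
  have hs : 0 < √(1 - β₂) := Real.sqrt_pos.2 (by linarith)
  have hb : 0 < 1 - β₁ := by linarith
  have hc : 0 < 1 - γ := by linarith
  simp only [Finset.mul_sum]
  rw [Finset.sum_comm]
  refine Finset.sum_le_sum fun h _ => ?_
  have mb := m_bound T β₂ hβ₂0 hβ₂1 β1 β₁ hβ1 hβ₁0 hβ₁1 γ hγ (fun t => g t h) (fun t => m t h)
    (fun t => v t h) (hm0 h) (hv0 h) (fun t h1 h2 => hm t h1 h2 h) (fun t h1 h2 => hv t h1 h2 h)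
  have cs := cs_bound (fun t => g t h) T
  have su := accS_sum γ hγ0 (fun t => g t h) T
  have nn := accS_nonneg γ hγ0 (fun t => g t h)
  generalize accS γ (fun t => g t h) = S at *
  have t0 : 0 ≤ γ * (S T / √(T : ℝ)) := mul_nonneg hγ0 (div_nonneg (nn T) (by positivity))
  have main : ∑ t ∈ Finset.Icc 1 T, S t / √(t : ℝ) ≤
      √(1 + Real.log T) * √(∑ t ∈ Finset.Icc 1 T, (g t h) ^ 2) / (1 - γ) := by
    rw [le_div_iff₀ hc]
    linarith
  have step : ∀ t ∈ Finset.Icc 1 T,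
      α / √(t : ℝ) / (2 * (1 - β1 t)) * (m t h ^ 2 / √(v t h)) ≤
        α / (2 * (1 - β₁) * √(1 - β₂)) * (S t / √(t : ℝ)) := by
    intro t ht
    rw [Finset.mem_Icc] at ht
    obtain ⟨_, h2⟩ := mb t ht.2
    obtain ⟨_, hb1⟩ := hβ1 t ht.1 ht.2
    have h3 : m t h ^ 2 / √(v t h) ≤ S t / √(1 - β₂) := by
      rcases (Real.sqrt_nonneg (v t h)).eq_or_lt with h0 | h0
      · rw [← h0, div_zero]; exact div_nonneg (nn t) hs.le
      · rw [div_le_div_iff₀ h0 hs]; linarith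
    have h4 : 0 ≤ S t / √(1 - β₂) := div_nonneg (nn t) hs.le
    calc α / √(t : ℝ) / (2 * (1 - β1 t)) * (m t h ^ 2 / √(v t h))
        ≤ α / √(t : ℝ) / (2 * (1 - β₁)) * (S t / √(1 - β₂)) := by gcongr
      _ = _ := by field_simp
  refine (Finset.sum_le_sum step).trans ?_
  rw [← Finset.mul_sum]
  have hX : 0 ≤ √(1 + Real.log T) * √(∑ t ∈ Finset.Icc 1 T, (g t h) ^ 2) / (1 - γ) :=
    div_nonneg (by positivity) hc.le
  have hco : α / (2 * (1 - β₁) * √(1 - β₂)) ≤ α / (2 * (1 - β₁) ^ 2 * √(1 - β₂)) := by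
    have : (1 - β₁) ^ 2 ≤ 1 - β₁ := by nlinarith
    gcongr
  calc _ ≤ α / (2 * (1 - β₁) * √(1 - β₂)) *
        (√(1 + Real.log T) * √(∑ t ∈ Finset.Icc 1 T, (g t h) ^ 2) / (1 - γ)) := by gcongr
    _ ≤ α / (2 * (1 - β₁) ^ 2 * √(1 - β₂)) *
        (√(1 + Real.log T) * √(∑ t ∈ Finset.Icc 1 T, (g t h) ^ 2) / (1 - γ)) := by gcongr
    _ = _ := by field_simp
end

section
/- Let T ≥ 1, G ≥ 0, 0 < β₂ < 1, 0 ≤ β₁ < 1 with γ = β₁/√β₂ < 1, and for each t let β_{1,t} ∈ [0, 1) with β_{1,t} ≤ β₁ and Σ_{t=1}^T β_{1,t}/(1−β_{1,t}) ≤ 1/(1−β₁). Let g₁, …, g_T ∈ ℝ^d with |g_{t,h}| ≤ G for all t, h, and define m₀ = 0, m_t = β_{1,t} m_{t−1} + (1−β_{1,t}) g_t; v₀ = 0, v_t = β₂ v_{t−1} + (1−β₂) g_t²; v̂₀ = 0, v̂_t = max(v̂_{t−1}, v_t) componentwise. Then, with the convention that terms with v̂_{t,h} = 0 are 0: Σ_{t=1}^T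 ( β_{1,t} / (2(1−β_{1,t})) ) Σ_{h=1}^d m_{t−1,h}² / √(v̂_{t,h}) ≤ G d / ( 2 (1−β₁)³ √(1−β₂) (1−γ) ). -/
/-- Lemma D.3 of the paper: bound on the first moving-average term of the
DASGrad/AMSGrad regret.  With `m_t = β_{1,t} m_{t−1} + (1−β_{1,t}) g_t`,
`v_t = β₂ v_{t−1} + (1−β₂) g_t²`, `v̂_t = max(v̂_{t−1}, v_t)` componentwise, `|g_{t,h}| ≤ G`,
`β_{1,t} ≤ β₁`, `γ = β₁/√β₂ < 1`, and the summability condition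
`Σ_t β_{1,t}/(1−β_{1,t}) ≤ 1/(1−β₁)`:
`Σ_t (β_{1,t}/(2(1−β_{1,t}))) Σ_h m_{t−1,h}²/√(v̂_{t,h}) ≤ G d/(2(1−β₁)³√(1−β₂)(1−γ))`.
(Division by zero in Lean is zero, matching the convention that terms with `v̂_{t,h} = 0`
vanish.) -/
theorem stmt_19 (d : ℕ) (T : ℕ) (hT : 1 ≤ T) (G : ℝ) (hG : 0 ≤ G)
    (β₂ : ℝ) (hβ₂0 : 0 < β₂) (hβ₂1 : β₂ < 1)
    (β₁ : ℝ) (hβ₁0 : 0 ≤ β₁) (hβ₁1 : β₁ < 1)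
    (γ : ℝ) (hγ : γ = β₁ / Real.sqrt β₂) (hγ1 : γ < 1)
    (β1 : ℕ → ℝ) (hβ1 : ∀ t, 1 ≤ t → t ≤ T → 0 ≤ β1 t ∧ β1 t < 1 ∧ β1 t ≤ β₁)
    (hβ1sum : ∑ t ∈ Finset.Icc 1 T, β1 t / (1 - β1 t) ≤ 1 / (1 - β₁))
    (g : ℕ → Fin d → ℝ) (hgb : ∀ t, 1 ≤ t → t ≤ T → ∀ h, |g t h| ≤ G)
    (m v vhat : ℕ → Fin d → ℝ)
    (hm0 : ∀ h, m 0 h = 0) (hv0 : ∀ h, v 0 h = 0) (hvhat0 : ∀ h, vhat 0 h = 0)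
    (hm : ∀ t, 1 ≤ t → t ≤ T → ∀ h, m t h = β1 t * m (t - 1) h + (1 - β1 t) * g t h)
    (hv : ∀ t, 1 ≤ t → t ≤ T → ∀ h, v t h = β₂ * v (t - 1) h + (1 - β₂) * (g t h) ^ 2)
    (hvhat : ∀ t, 1 ≤ t → t ≤ T → ∀ h, vhat t h = max (vhat (t - 1) h) (v t h)) :
    ∑ t ∈ Finset.Icc 1 T, (β1 t / (2 * (1 - β1 t))) *
        ∑ h, (m (t - 1) h) ^ 2 / Real.sqrt (vhat t h) ≤
      G * (d : ℝ) / (2 * (1 - β₁) ^ 3 * Real.sqrt (1 - β₂) * (1 - γ)) := by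
  have hs2 : 0 < Real.sqrt β₂ := Real.sqrt_pos.mpr hβ₂0
  have hs : 0 < Real.sqrt (1 - β₂) := Real.sqrt_pos.mpr (by linarith)
  have hssq : Real.sqrt (1 - β₂) ^ 2 = 1 - β₂ := Real.sq_sqrt (by linarith)
  have hγ0 : 0 ≤ γ := by rw [hγ]; positivity
  have hγm : β₁ = γ * Real.sqrt β₂ := by rw [hγ]; field_simp
  have hγp : 0 < 1 - γ := by linarith
  set s := Real.sqrt (1 - β₂) with hsdef
  have key : ∀ t, t ≤ T → ∀ h, |m t h| ≤ G ∧ 0 ≤ v t h ∧ v t h ≤ vhat t h ∧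
      s * (1 - γ) * |m t h| ≤ Real.sqrt (v t h) := by
    intro t
    induction t with
    | zero =>
      intro _ h
      simp [hm0, hv0, hvhat0, hG]
    | succ k ih =>
      intro hk h
      obtain ⟨i1, i2, i3, i4⟩ := ih (by omega) h
      obtain ⟨b0, b1, b2⟩ := hβ1 (k+1) (by omega) hk
      have hg := hgb (k+1) (by omega) hk h
      have em := hm (k+1) (by omega) hk h
      have ev := hv (k+1) (by omega) hk h
      have eh := hvhat (k+1) (by omega) hk h
      simp only [Nat.add_sub_cancel] at em ev eh
      have habs : |m (k+1) h| ≤ β1 (k+1) * |m k h| + (1 - β1 (k+1)) * |g (k+1) h| := by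
        rw [em]
        refine (abs_add_le _ _).trans ?_
        rw [abs_mul, abs_mul, abs_of_nonneg b0, abs_of_nonneg (by linarith : 0 ≤ 1 - β1 (k+1))]
      have p1 : 0 ≤ β₂ * v k h := by positivity
      have p2 : 0 ≤ (1 - β₂) * (g (k+1) h)^2 := mul_nonneg (by linarith) (sq_nonneg _)
      refine ⟨?_, by rw [ev]; linarith, by rw [eh]; exact le_max_right _ _, ?_⟩
      · refine habs.trans ?_
        nlinarith [mul_le_mul_of_nonneg_left i1 b0,
          mul_le_mul_of_nonneg_left hg (by linarith : 0 ≤ 1 - β1 (k+1))]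
      · have q1 : Real.sqrt β₂ * Real.sqrt (v k h) ≤ Real.sqrt (v (k+1) h) := by
          rw [← Real.sqrt_mul hβ₂0.le]
          exact Real.sqrt_le_sqrt (by linarith)
        have q2 : s * |g (k+1) h| ≤ Real.sqrt (v (k+1) h) := by
          apply Real.le_sqrt_of_sq_le
          rw [mul_pow, hssq, sq_abs]; linarith
        have r1 : β1 (k+1) * (s * (1 - γ) * |m k h|) ≤ γ * Real.sqrt (v (k+1) h) := by
          calc _ ≤ β₁ * Real.sqrt (v k h) :=
                mul_le_mul b2 i4 (by positivity) hβ₁0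
            _ = γ * (Real.sqrt β₂ * Real.sqrt (v k h)) := by rw [hγm]; ring
            _ ≤ _ := mul_le_mul_of_nonneg_left q1 hγ0
        have r2 : (1 - γ) * ((1 - β1 (k+1)) * (s * |g (k+1) h|))
            ≤ (1 - γ) * Real.sqrt (v (k+1) h) := by
          apply mul_le_mul_of_nonneg_left _ hγp.le
          refine le_trans ?_ q2
          exact mul_le_of_le_one_left (by positivity) (by linarith)
        calc s * (1 - γ) * |m (k+1) h|
            ≤ s * (1 - γ) * (β1 (k+1) * |m k h| + (1 - β1 (k+1)) * |g (k+1) h|) :=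
              mul_le_mul_of_nonneg_left habs (by positivity)
          _ = β1 (k+1) * (s * (1 - γ) * |m k h|)
              + (1 - γ) * ((1 - β1 (k+1)) * (s * |g (k+1) h|)) := by ring
          _ ≤ _ := by linarith
  have hterm : ∀ t, 1 ≤ t → t ≤ T → ∀ h,
      (m (t-1) h)^2 / Real.sqrt (vhat t h) ≤ G / (s * (1 - γ)) := by
    intro t h1 h2 h
    obtain ⟨i1, i2, i3, i4⟩ := key (t-1) (by omega) h
    have hle : v (t-1) h ≤ vhat t h := by
      rw [hvhat t h1 h2 h]; exact i3.trans (le_max_left _ _)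
    have i5 := i4.trans (Real.sqrt_le_sqrt hle)
    rcases (Real.sqrt_nonneg (vhat t h)).eq_or_lt with h0 | h0
    · rw [← h0, div_zero]; positivity
    · rw [div_le_div_iff₀ h0 (by positivity), ← sq_abs]
      calc |m (t-1) h|^2 * (s * (1 - γ)) = |m (t-1) h| * (s * (1 - γ) * |m (t-1) h|) := by ring
        _ ≤ _ := mul_le_mul i1 i5 (by positivity) hG
  set K := G / (s * (1 - γ)) with hK
  have hK0 : 0 ≤ K := by positivity
  have hb : 0 < 1 - β₁ := by linarith
  calc _ ≤ ∑ t ∈ Finset.Icc 1 T, (β1 t / (1 - β1 t)) * (d * K / 2) := by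
        apply Finset.sum_le_sum
        intro t ht
        rw [Finset.mem_Icc] at ht
        obtain ⟨b0, b1, b2⟩ := hβ1 t ht.1 ht.2
        have b3 : 0 < 1 - β1 t := by linarith
        have hsum : ∑ h, (m (t - 1) h) ^ 2 / Real.sqrt (vhat t h) ≤ d * K := by
          refine (Finset.sum_le_sum fun h _ => hterm t ht.1 ht.2 h).trans ?_
          simp
        calc _ ≤ (β1 t / (2 * (1 - β1 t))) * (d * K) :=
              mul_le_mul_of_nonneg_left hsum (by positivity)
          _ = _ := by field_simp
    _ ≤ 1 / (1 - β₁) * (d * K / 2) := by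
        rw [← Finset.sum_mul]
        exact mul_le_mul_of_nonneg_right hβ1sum (by positivity)
    _ = G * d / (2 * (1 - β₁) * s * (1 - γ)) := by rw [hK]; field_simp
    _ ≤ _ := by
        have hp : (1 - β₁)^3 ≤ 1 - β₁ := pow_le_of_le_one hb.le (by linarith) (by norm_num)
        gcongr
end
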